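/- Let Ω ⊆ ℝ² be open, ε > 0, h_ex ∈ ℝ, and let f, h₀ : Ω → ℝ be smooth with Δf = f and Δh₀ = h₀ on Ω; set Z := ∇f − h_ex ∇^⊥ h₀. Suppose v : Ω × ℝ → ℂ and B : Ω × ℝ → ℝ² are smooth and satisfy, pointwise on Ω × ℝ with h' := curl B: ∂_t v + ifv = Δ_B v + (v/ε²)(1−|v|²) + 2i ∇_B v · Z + ivf − v|Z|², and ∂_t B + ∇f = ∇^⊥ h' + (iv, ∇_B v) + |v|²∇f − (|v|²−1) h_ex ∇^⊥ h₀. Then the modified energy density g̃⁰_ε(v,B) := g⁰_ε(v,B) + ½|v|²|Z|² satisfies, pointwise on Ω × ℝ: ∂_t g̃⁰_ε(v,B) = div(∂_t v, ∇_B v) + curl(h' ∂_t B) − |∂_t v|² − |∂_t B|² + V(v,B,0) · Z. -/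

import Mathlib

noncomputable section

open Complex

/-- Real inner product of two complex numbers: `(a,b) = Re a · Re b + Im a · Im b`. -/
def rip (a b : ℂ) : ℝ := a.re * b.re + a.im * b.im

/-- `(a, X)` for `a : ℂ` and `X : ℂ²`: the vector in `ℝ²` with components `(a,X₁)`, `(a,X₂)`. -/
def ripv (a : ℂ) (X : ℂ × ℂ) : ℝ × ℝ := (rip a X.1, rip a X.2)

/-- Dot product of `X : ℂ²` with `Z : ℝ²`: `X·Z = X₁Z₁ + X₂Z₂ ∈ ℂ`. -/
def cdotR (X : ℂ × ℂ) (Z : ℝ × ℝ) : ℂ := X.1 * (Z.1 : ℂ) + X.2 * (Z.2 : ℂ)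

/-- Euclidean dot product on `ℝ²`. -/
def rdot (a b : ℝ × ℝ) : ℝ := a.1 * b.1 + a.2 * b.2

/-- Perpendicular of a vector: `Z^⊥ = (−Z₂, Z₁)`. -/
def perp (a : ℝ × ℝ) : ℝ × ℝ := (-a.2, a.1)

/-! ### Spatial differential operators for functions on `ℝ²` -/

/-- First spatial partial derivative `∂₁`. -/
def pd1 {E : Type*} [NormedAddCommGroup E] [NormedSpace ℝ E]
    (f : ℝ × ℝ → E) (x : ℝ × ℝ) : E := fderiv ℝ f x (1, 0)

/-- Second spatial partial derivative `∂₂`. -/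
def pd2 {E : Type*} [NormedAddCommGroup E] [NormedSpace ℝ E]
    (f : ℝ × ℝ → E) (x : ℝ × ℝ) : E := fderiv ℝ f x (0, 1)

/-- Gradient `∇g = (∂₁g, ∂₂g)`. -/
def sgrad (g : ℝ × ℝ → ℝ) (x : ℝ × ℝ) : ℝ × ℝ := (pd1 g x, pd2 g x)

/-- Perpendicular gradient `∇^⊥ g = (−∂₂g, ∂₁g)`. -/
def sgradPerp (g : ℝ × ℝ → ℝ) (x : ℝ × ℝ) : ℝ × ℝ := (-(pd2 g x), pd1 g x)

/-- Laplacian `Δg = ∂₁∂₁g + ∂₂∂₂g`. -/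
def slap (g : ℝ × ℝ → ℝ) (x : ℝ × ℝ) : ℝ := pd1 (pd1 g) x + pd2 (pd2 g) x

/-- Curl of a vector field: `curl X = ∂₁X₂ − ∂₂X₁`. -/
def scurl (X : ℝ × ℝ → ℝ × ℝ) (x : ℝ × ℝ) : ℝ := (pd1 X x).2 - (pd2 X x).1

/-- Divergence of a vector field: `div X = ∂₁X₁ + ∂₂X₂`. -/
def sdiv (X : ℝ × ℝ → ℝ × ℝ) (x : ℝ × ℝ) : ℝ := (pd1 X x).1 + (pd2 X x).2

/-- Covariant partial derivative `∂₁^A u = ∂₁u − iA₁u`. -/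
def cpd1 (A : ℝ × ℝ → ℝ × ℝ) (u : ℝ × ℝ → ℂ) (x : ℝ × ℝ) : ℂ :=
  pd1 u x - Complex.I * ((A x).1 : ℂ) * u x

/-- Covariant partial derivative `∂₂^A u = ∂₂u − iA₂u`. -/
def cpd2 (A : ℝ × ℝ → ℝ × ℝ) (u : ℝ × ℝ → ℂ) (x : ℝ × ℝ) : ℂ :=
  pd2 u x - Complex.I * ((A x).2 : ℂ) * u x

/-- Covariant gradient `∇_A u = ∇u − iAu`. -/
def covGrad (A : ℝ × ℝ → ℝ × ℝ) (u : ℝ × ℝ → ℂ) (x : ℝ × ℝ) : ℂ × ℂ :=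
  (cpd1 A u x, cpd2 A u x)

/-- Covariant Laplacian `Δ_A u = ∂₁^A ∂₁^A u + ∂₂^A ∂₂^A u`. -/
def covLap (A : ℝ × ℝ → ℝ × ℝ) (u : ℝ × ℝ → ℂ) (x : ℝ × ℝ) : ℂ :=
  cpd1 A (cpd1 A u) x + cpd2 A (cpd2 A u) x

/-- Vorticity `μ(u,A) = curl((iu, ∇_A u) + A)`. -/
def svort (u : ℝ × ℝ → ℂ) (A : ℝ × ℝ → ℝ × ℝ) (x : ℝ × ℝ) : ℝ :=
  scurl (fun y => ripv (Complex.I * u y) (covGrad A u y) + A y) x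

/-- Ginzburg–Landau energy density
`g⁰_ε(u,A) = ½(|∇_A u|² + (1−|u|²)²/(2ε²) + (curl A)²)`. -/
def glEnergy (ε : ℝ) (u : ℝ × ℝ → ℂ) (A : ℝ × ℝ → ℝ × ℝ) (x : ℝ × ℝ) : ℝ :=
  (1 / 2) * (Complex.normSq (cpd1 A u x) + Complex.normSq (cpd2 A u x)
    + (1 - Complex.normSq (u x)) ^ 2 / (2 * ε ^ 2) + (scurl A x) ^ 2)

/-! ### Space-time differential operators for functions on `ℝ² × ℝ`
(spatial operators act in the spatial variables, `tdt` is the time derivative) -/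

/-- First spatial partial derivative `∂₁`. -/
def sp1 {E : Type*} [NormedAddCommGroup E] [NormedSpace ℝ E]
    (f : (ℝ × ℝ) × ℝ → E) (z : (ℝ × ℝ) × ℝ) : E := fderiv ℝ f z ((1, 0), 0)

/-- Second spatial partial derivative `∂₂`. -/
def sp2 {E : Type*} [NormedAddCommGroup E] [NormedSpace ℝ E]
    (f : (ℝ × ℝ) × ℝ → E) (z : (ℝ × ℝ) × ℝ) : E := fderiv ℝ f z ((0, 1), 0)

/-- Time derivative `∂_t`. -/
def tdt {E : Type*} [NormedAddCommGroup E] [NormedSpace ℝ E]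
    (f : (ℝ × ℝ) × ℝ → E) (z : (ℝ × ℝ) × ℝ) : E := fderiv ℝ f z ((0, 0), 1)

/-- Spatial gradient. -/
def tgrad (g : (ℝ × ℝ) × ℝ → ℝ) (z : (ℝ × ℝ) × ℝ) : ℝ × ℝ := (sp1 g z, sp2 g z)

/-- Spatial perpendicular gradient `∇^⊥ g = (−∂₂g, ∂₁g)`. -/
def tgradPerp (g : (ℝ × ℝ) × ℝ → ℝ) (z : (ℝ × ℝ) × ℝ) : ℝ × ℝ := (-(sp2 g z), sp1 g z)

/-- Spatial Laplacian. -/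
def tlap (g : (ℝ × ℝ) × ℝ → ℝ) (z : (ℝ × ℝ) × ℝ) : ℝ := sp1 (sp1 g) z + sp2 (sp2 g) z

/-- Spatial curl of a time-dependent vector field. -/
def tcurl (X : (ℝ × ℝ) × ℝ → ℝ × ℝ) (z : (ℝ × ℝ) × ℝ) : ℝ := (sp1 X z).2 - (sp2 X z).1

/-- Spatial divergence of a time-dependent vector field. -/
def tdiv (X : (ℝ × ℝ) × ℝ → ℝ × ℝ) (z : (ℝ × ℝ) × ℝ) : ℝ := (sp1 X z).1 + (sp2 X z).2

/-- Covariant partial derivative `∂₁^B w = ∂₁w − iB₁w`. -/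
def tcpd1 (B : (ℝ × ℝ) × ℝ → ℝ × ℝ) (w : (ℝ × ℝ) × ℝ → ℂ) (z : (ℝ × ℝ) × ℝ) : ℂ :=
  sp1 w z - Complex.I * ((B z).1 : ℂ) * w z

/-- Covariant partial derivative `∂₂^B w = ∂₂w − iB₂w`. -/
def tcpd2 (B : (ℝ × ℝ) × ℝ → ℝ × ℝ) (w : (ℝ × ℝ) × ℝ → ℂ) (z : (ℝ × ℝ) × ℝ) : ℂ :=
  sp2 w z - Complex.I * ((B z).2 : ℂ) * w z

/-- Covariant gradient `∇_B w = ∇w − iBw` (spatial). -/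
def tcovGrad (B : (ℝ × ℝ) × ℝ → ℝ × ℝ) (w : (ℝ × ℝ) × ℝ → ℂ) (z : (ℝ × ℝ) × ℝ) : ℂ × ℂ :=
  (tcpd1 B w z, tcpd2 B w z)

/-- Covariant Laplacian `Δ_B w`. -/
def tcovLap (B : (ℝ × ℝ) × ℝ → ℝ × ℝ) (w : (ℝ × ℝ) × ℝ → ℂ) (z : (ℝ × ℝ) × ℝ) : ℂ :=
  tcpd1 B (tcpd1 B w) z + tcpd2 B (tcpd2 B w) z

/-- Covariant time derivative `∂_ξ w = ∂_t w + iξw`. -/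
def covt (ξ : (ℝ × ℝ) × ℝ → ℝ) (w : (ℝ × ℝ) × ℝ → ℂ) (z : (ℝ × ℝ) × ℝ) : ℂ :=
  tdt w z + Complex.I * (ξ z : ℂ) * w z

/-- Vorticity `μ(w,B) = curl((iw, ∇_B w) + B)`. -/
def tvort (w : (ℝ × ℝ) × ℝ → ℂ) (B : (ℝ × ℝ) × ℝ → ℝ × ℝ) (z : (ℝ × ℝ) × ℝ) : ℝ :=
  tcurl (fun y => ripv (Complex.I * w y) (tcovGrad B w y) + B y) z

/-- Velocity `V(w,B,ξ) = ∇(iw,∂_ξ w) − ∂_t(iw,∇_B w) − (∂_t B + ∇ξ)`. -/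
def tvel (w : (ℝ × ℝ) × ℝ → ℂ) (B : (ℝ × ℝ) × ℝ → ℝ × ℝ) (ξ : (ℝ × ℝ) × ℝ → ℝ)
    (z : (ℝ × ℝ) × ℝ) : ℝ × ℝ :=
  tgrad (fun y => rip (Complex.I * w y) (covt ξ w y)) z
    - tdt (fun y => ripv (Complex.I * w y) (tcovGrad B w y)) z
    - (tdt B z + tgrad ξ z)

/-- Time-dependent Ginzburg–Landau energy density. -/
def tglEnergy (ε : ℝ) (w : (ℝ × ℝ) × ℝ → ℂ) (B : (ℝ × ℝ) × ℝ → ℝ × ℝ)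
    (z : (ℝ × ℝ) × ℝ) : ℝ :=
  (1 / 2) * (Complex.normSq (tcpd1 B w z) + Complex.normSq (tcpd2 B w z)
    + (1 - Complex.normSq (w z)) ^ 2 / (2 * ε ^ 2) + (tcurl B z) ^ 2)

/-!
Write `D_e` for the covariant derivative in the direction `e`. Two facts carry the proof: `D_e` is
compatible with the real inner product, `∂_e (X, Y) = (D_e X, Y) + (X, D_e Y)`, and its commutator
with `∂_t` is multiplication by `-i ∂_t B_e`. They give

* the first variation of the energy,
  `∂_t g = div (∂_t v, ∇_B v) + curl (h' ∂_t B) - (∂_t v, Δ_B v + v (1 - |v|²) / ε²)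
    - ∂_t B · (∇^⊥ h' + (iv, ∇_B v))`;
* the velocity, `V(v, B, 0) = 2 (∂_t v, i ∇_B v) - (1 - |v|²) ∂_t B`.

Substituting the equations into the first, every term containing `Z` other than those of `V · Z`
cancels. Since `f` drops out of the first equation and the second one reads
`∂_t B = ∇^⊥ h' + (iv, ∇_B v) + (|v|² - 1) Z`, this works for any differentiable vector field `Z`.
-/

section Algebra

theorem rip_eq_inner (a b : ℂ) : rip a b = inner ℝ a b := by
  simp only [rip, Complex.inner, mul_re, conj_re, conj_im]
  ring

theorem rip_self (a : ℂ) : rip a a = normSq a :=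
  (normSq_apply a).symm

theorem rip_add_right (a b c : ℂ) : rip a (b + c) = rip a b + rip a c := by
  simp only [rip_eq_inner, inner_add_right]

theorem rip_sub_right (a b c : ℂ) : rip a (b - c) = rip a b - rip a c := by
  simp only [rip_eq_inner, inner_sub_right]

theorem rip_mul_ofReal_right (a b : ℂ) (r : ℝ) : rip a (b * r) = r * rip a b := by
  rw [mul_comm b, ← real_smul, rip_eq_inner, rip_eq_inner, real_inner_smul_right]

theorem rdot_add_right (a b c : ℝ × ℝ) : rdot a (b + c) = rdot a b + rdot a c := by
  simp only [rdot, Prod.fst_add, Prod.snd_add]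
  ring

theorem rdot_smul_right (r : ℝ) (a b : ℝ × ℝ) : rdot a (r • b) = r * rdot a b := by
  simp only [rdot, Prod.smul_fst, Prod.smul_snd, smul_eq_mul]
  ring

end Algebra

section DirectionalDerivatives

variable {E F : Type*} [NormedAddCommGroup E] [NormedSpace ℝ E]
  [NormedAddCommGroup F] [NormedSpace ℝ F] {z : F}

theorem differentiableAt_fderiv_apply {X : F → E} (hX : ContDiffAt ℝ 2 X z) (e : F) :
    DifferentiableAt ℝ (fun y => fderiv ℝ X y e) z :=
  ((hX.fderiv_right (m := 1) (by norm_num)).differentiableAt one_ne_zero).clm_apply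
    (differentiableAt_const e)

theorem fderiv_fderiv_apply_comm {X : F → E} (hX : ContDiffAt ℝ 2 X z) (e e' : F) :
    fderiv ℝ (fun y => fderiv ℝ X y e) z e' = fderiv ℝ (fun y => fderiv ℝ X y e') z e := by
  have hX' : DifferentiableAt ℝ (fderiv ℝ X) z :=
    (hX.fderiv_right (m := 1) (by norm_num)).differentiableAt one_ne_zero
  have fderiv_apply (a b : F) :
      fderiv ℝ (fun y => fderiv ℝ X y a) z b = fderiv ℝ (fderiv ℝ X) z b a := by
    simp [fderiv_clm_apply hX' (differentiableAt_const a)]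
  rw [fderiv_apply, fderiv_apply]
  exact hX.isSymmSndFDerivAt minSmoothness_of_isRCLikeNormedField.le e' e

theorem fderiv_fst_apply {X : F → ℝ × ℝ} (hX : DifferentiableAt ℝ X z) (e : F) :
    fderiv ℝ (fun y => (X y).1) z e = (fderiv ℝ X z e).1 := by
  rw [fderiv.fst hX]
  rfl

theorem fderiv_snd_apply {X : F → ℝ × ℝ} (hX : DifferentiableAt ℝ X z) (e : F) :
    fderiv ℝ (fun y => (X y).2) z e = (fderiv ℝ X z e).2 := by
  rw [fderiv.snd hX]
  rfl

theorem differentiableAt_rip {X Y : F → ℂ} (hX : DifferentiableAt ℝ X z)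
    (hY : DifferentiableAt ℝ Y z) : DifferentiableAt ℝ (fun y => rip (X y) (Y y)) z := by
  simpa only [rip_eq_inner] using hX.inner ℝ hY

theorem differentiableAt_ripv {X : F → ℂ} {Y : F → ℂ × ℂ} (hX : DifferentiableAt ℝ X z)
    (hY : DifferentiableAt ℝ Y z) : DifferentiableAt ℝ (fun y => ripv (X y) (Y y)) z :=
  (differentiableAt_rip hX hY.fst).prodMk (differentiableAt_rip hX hY.snd)

theorem fderiv_rip_apply {X Y : F → ℂ} (hX : DifferentiableAt ℝ X z)
    (hY : DifferentiableAt ℝ Y z) (e : F) :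
    fderiv ℝ (fun y => rip (X y) (Y y)) z e
      = rip (fderiv ℝ X z e) (Y z) + rip (X z) (fderiv ℝ Y z e) := by
  simp only [rip_eq_inner]
  rw [fderiv_inner_apply ℝ hX hY, add_comm]

theorem differentiableAt_normSq {w : F → ℂ} (hw : DifferentiableAt ℝ w z) :
    DifferentiableAt ℝ (fun y => normSq (w y)) z := by
  simpa only [rip_self] using differentiableAt_rip hw hw

theorem fderiv_normSq_apply {w : F → ℂ} (hw : DifferentiableAt ℝ w z) (e : F) :
    fderiv ℝ (fun y => normSq (w y)) z e = 2 * rip (fderiv ℝ w z e) (w z) := by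
  simp only [← rip_self]
  rw [fderiv_rip_apply hw hw, rip_eq_inner (w z), real_inner_comm, ← rip_eq_inner, two_mul]

end DirectionalDerivatives

section CovariantDerivative

variable {F : Type*} [NormedAddCommGroup F] [NormedSpace ℝ F] {a : F → ℝ} {v : F → ℂ} {z : F}

/-- The covariant derivative `∂_e w - i a w` in the direction `e`, where `a` is the component of
the connection in that direction. The operators `tcpd1` and `tcpd2` are definitionally the cases
where `e` is a spatial basis vector and `a` the corresponding component of `B`. -/
def covDeriv (a : F → ℝ) (e : F) (w : F → ℂ) (z : F) : ℂ :=
  fderiv ℝ w z e - I * (a z : ℂ) * w z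

theorem hasFDerivAt_I_mul_ofReal_mul (ha : DifferentiableAt ℝ a z) (hv : DifferentiableAt ℝ v z) :
    HasFDerivAt (fun y => I * (a y : ℂ) * v y)
      ((I * (a z : ℂ)) • fderiv ℝ v z + v z • I • (ofRealCLM ∘SL fderiv ℝ a z)) z :=
  ((ofRealCLM.hasFDerivAt.comp z ha.hasFDerivAt).const_mul I).mul hv.hasFDerivAt

theorem differentiableAt_covDeriv (ha : DifferentiableAt ℝ a z) (hv : ContDiffAt ℝ 2 v z) (e : F) :
    DifferentiableAt ℝ (covDeriv a e v) z :=
  (differentiableAt_fderiv_apply hv e).sub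
    (hasFDerivAt_I_mul_ofReal_mul ha (hv.differentiableAt two_ne_zero)).differentiableAt

theorem fderiv_covDeriv_apply (ha : DifferentiableAt ℝ a z) (hv : ContDiffAt ℝ 2 v z) (e τ : F) :
    fderiv ℝ (covDeriv a e v) z τ
      = covDeriv a e (fun y => fderiv ℝ v y τ) z - (fderiv ℝ a z τ : ℂ) * (I * v z) := by
  have hIav := hasFDerivAt_I_mul_ofReal_mul ha (hv.differentiableAt two_ne_zero)
  change fderiv ℝ (fun y => fderiv ℝ v y e - I * (a y : ℂ) * v y) z τ = _
  rw [fderiv_fun_sub (differentiableAt_fderiv_apply hv e) hIav.differentiableAt, hIav.fderiv]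
  simp only [covDeriv, sub_apply, add_apply, smul_apply, ContinuousLinearMap.comp_apply,
    ofRealCLM_apply, smul_eq_mul, fderiv_fderiv_apply_comm hv e τ]
  ring

theorem fderiv_rip_apply_eq_covDeriv {X Y : F → ℂ} (hX : DifferentiableAt ℝ X z)
    (hY : DifferentiableAt ℝ Y z) (a : F → ℝ) (e : F) :
    fderiv ℝ (fun y => rip (X y) (Y y)) z e
      = rip (covDeriv a e X z) (Y z) + rip (X z) (covDeriv a e Y z) := by
  rw [fderiv_rip_apply hX hY]
  simp only [covDeriv, rip, sub_re, sub_im, mul_re, mul_im, I_re, I_im, ofReal_re, ofReal_im]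
  ring

theorem covDeriv_I_mul (hv : DifferentiableAt ℝ v z) (a : F → ℝ) (e : F) :
    covDeriv a e (fun y => I * v y) z = I * covDeriv a e v z := by
  simp only [covDeriv, fderiv_const_mul hv, smul_apply, smul_eq_mul]
  ring

theorem fderiv_normSq_covDeriv_apply (ha : DifferentiableAt ℝ a z) (hv : ContDiffAt ℝ 2 v z)
    (e τ : F) :
    fderiv ℝ (fun y => normSq (covDeriv a e v y)) z τ
      = 2 * (fderiv ℝ (fun y => rip (fderiv ℝ v y τ) (covDeriv a e v y)) z e
        - rip (fderiv ℝ v z τ) (covDeriv a e (covDeriv a e v) z)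
        - fderiv ℝ a z τ * rip (I * v z) (covDeriv a e v z)) := by
  have hDv := differentiableAt_covDeriv ha hv e
  rw [fderiv_normSq_apply hDv, fderiv_covDeriv_apply ha hv,
    fderiv_rip_apply_eq_covDeriv (differentiableAt_fderiv_apply hv τ) hDv a]
  simp only [rip, sub_re, sub_im, re_ofReal_mul, im_ofReal_mul]
  ring

theorem fderiv_rip_I_mul_sub_fderiv_rip_I_mul (ha : DifferentiableAt ℝ a z)
    (hv : ContDiffAt ℝ 2 v z) (e τ : F) :
    fderiv ℝ (fun y => rip (I * v y) (fderiv ℝ v y τ)) z e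
        - fderiv ℝ (fun y => rip (I * v y) (covDeriv a e v y)) z τ
      = 2 * rip (fderiv ℝ v z τ) (I * covDeriv a e v z) + normSq (v z) * fderiv ℝ a z τ := by
  have hv' := hv.differentiableAt two_ne_zero
  have hIv : DifferentiableAt ℝ (fun y => I * v y) z := hv'.const_mul I
  rw [fderiv_rip_apply_eq_covDeriv hIv (differentiableAt_fderiv_apply hv τ) a,
    fderiv_rip_apply hIv (differentiableAt_covDeriv ha hv e), covDeriv_I_mul hv',
    fderiv_covDeriv_apply ha hv, fderiv_const_mul hv']
  simp only [rip, normSq_apply, smul_apply, smul_eq_mul, sub_re, sub_im, re_ofReal_mul,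
    im_ofReal_mul, I_mul_re, I_mul_im]
  ring

end CovariantDerivative

section SpaceTime

variable {v : (ℝ × ℝ) × ℝ → ℂ} {B : (ℝ × ℝ) × ℝ → ℝ × ℝ} {z : (ℝ × ℝ) × ℝ}

theorem tdt_comp_fst {g : ℝ × ℝ → ℝ} (hg : DifferentiableAt ℝ g z.1) :
    tdt (fun y => g y.1) z = 0 := by
  have hcomp : HasFDerivAt (fun y : (ℝ × ℝ) × ℝ => g y.1) _ z :=
    hg.hasFDerivAt.comp z hasFDerivAt_fst
  rw [tdt, hcomp.fderiv]
  exact map_zero (fderiv ℝ g z.1)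

theorem tdt_fst (hB : DifferentiableAt ℝ B z) : tdt (fun y => (B y).1) z = (tdt B z).1 :=
  fderiv_fst_apply hB _

theorem tdt_snd (hB : DifferentiableAt ℝ B z) : tdt (fun y => (B y).2) z = (tdt B z).2 :=
  fderiv_snd_apply hB _

theorem differentiableAt_tcpd1 (hv : ContDiffAt ℝ 2 v z) (hB : DifferentiableAt ℝ B z) :
    DifferentiableAt ℝ (tcpd1 B v) z :=
  differentiableAt_covDeriv hB.fst hv _

theorem differentiableAt_tcpd2 (hv : ContDiffAt ℝ 2 v z) (hB : DifferentiableAt ℝ B z) :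
    DifferentiableAt ℝ (tcpd2 B v) z :=
  differentiableAt_covDeriv hB.snd hv _

theorem differentiableAt_tcurl (hB : ContDiffAt ℝ 2 B z) : DifferentiableAt ℝ (tcurl B) z :=
  (differentiableAt_fderiv_apply hB _).snd.sub (differentiableAt_fderiv_apply hB _).fst

theorem differentiableAt_tcovGrad (hv : ContDiffAt ℝ 2 v z) (hB : DifferentiableAt ℝ B z) :
    DifferentiableAt ℝ (tcovGrad B v) z :=
  (differentiableAt_tcpd1 hv hB).prodMk (differentiableAt_tcpd2 hv hB)

theorem tdiv_ripv {u : (ℝ × ℝ) × ℝ → ℂ} {X : (ℝ × ℝ) × ℝ → ℂ × ℂ} (hu : DifferentiableAt ℝ u z)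
    (hX : DifferentiableAt ℝ X z) :
    tdiv (fun y => ripv (u y) (X y)) z
      = sp1 (fun y => rip (u y) (X y).1) z + sp2 (fun y => rip (u y) (X y).2) z := by
  have hpair := differentiableAt_ripv hu hX
  exact (congrArg₂ (· + ·) (fderiv_fst_apply hpair _) (fderiv_snd_apply hpair _)).symm

theorem tcurl_smul {g : (ℝ × ℝ) × ℝ → ℝ} {X : (ℝ × ℝ) × ℝ → ℝ × ℝ} (hg : DifferentiableAt ℝ g z)
    (hX : DifferentiableAt ℝ X z) :
    tcurl (fun y => g y • X y) z = g z * tcurl X z + rdot (X z) (tgradPerp g z) := by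
  simp only [tcurl, sp1, sp2, rdot, tgradPerp, fderiv_fun_smul hg hX, add_apply, smul_apply,
    ContinuousLinearMap.smulRight_apply, Prod.fst_add, Prod.snd_add, Prod.smul_fst, Prod.smul_snd,
    smul_eq_mul]
  ring

theorem tdt_tcurl (hB : ContDiffAt ℝ 2 B z) : tdt (tcurl B) z = tcurl (tdt B) z := by
  have h₁ : DifferentiableAt ℝ (sp1 B) z := differentiableAt_fderiv_apply hB _
  have h₂ : DifferentiableAt ℝ (sp2 B) z := differentiableAt_fderiv_apply hB _
  have h₁₂ : tdt (sp1 B) z = sp1 (tdt B) z := fderiv_fderiv_apply_comm hB _ _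
  have h₂₁ : tdt (sp2 B) z = sp2 (tdt B) z := fderiv_fderiv_apply_comm hB _ _
  change fderiv ℝ (fun y => (sp1 B y).2 - (sp2 B y).1) z _ = _
  rw [fderiv_fun_sub h₁.snd h₂.fst, sub_apply, fderiv_snd_apply h₁, fderiv_fst_apply h₂,
    ← tdt, ← tdt, h₁₂, h₂₁, tcurl]

theorem tdt_normSq_tcovGrad (hv : ContDiffAt ℝ 2 v z) (hB : DifferentiableAt ℝ B z) :
    tdt (fun y => normSq (tcpd1 B v y) + normSq (tcpd2 B v y)) z
      = 2 * (tdiv (fun y => ripv (tdt v y) (tcovGrad B v y)) z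
        - rip (tdt v z) (tcovLap B v z)
        - rdot (tdt B z) (ripv (I * v z) (tcovGrad B v z))) := by
  have h₁ := differentiableAt_tcpd1 hv hB
  have h₂ := differentiableAt_tcpd2 hv hB
  have e₁ : tdt (fun y => normSq (tcpd1 B v y)) z
      = 2 * (sp1 (fun y => rip (tdt v y) (tcpd1 B v y)) z
        - rip (tdt v z) (tcpd1 B (tcpd1 B v) z)
        - (tdt B z).1 * rip (I * v z) (tcpd1 B v z)) := by
    rw [← tdt_fst hB]
    exact fderiv_normSq_covDeriv_apply hB.fst hv _ _
  have e₂ : tdt (fun y => normSq (tcpd2 B v y)) z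
      = 2 * (sp2 (fun y => rip (tdt v y) (tcpd2 B v y)) z
        - rip (tdt v z) (tcpd2 B (tcpd2 B v) z)
        - (tdt B z).2 * rip (I * v z) (tcpd2 B v z)) := by
    rw [← tdt_snd hB]
    exact fderiv_normSq_covDeriv_apply hB.snd hv _ _
  have hdiv : tdiv (fun y => ripv (tdt v y) (tcovGrad B v y)) z
      = sp1 (fun y => rip (tdt v y) (tcpd1 B v y)) z
        + sp2 (fun y => rip (tdt v y) (tcpd2 B v y)) z :=
    tdiv_ripv (differentiableAt_fderiv_apply hv _) (differentiableAt_tcovGrad hv hB)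
  rw [tdt, fderiv_fun_add (differentiableAt_normSq h₁) (differentiableAt_normSq h₂), add_apply,
    ← tdt, ← tdt, e₁, e₂, hdiv, tcovLap, rip_add_right]
  simp only [rdot, ripv, tcovGrad]
  ring

theorem tdt_tcurl_sq (hB : ContDiffAt ℝ 2 B z) :
    tdt (fun y => tcurl B y ^ 2) z
      = 2 * (tcurl (fun y => tcurl B y • tdt B y) z
        - rdot (tdt B z) (tgradPerp (tcurl B) z)) := by
  have hcurl := differentiableAt_tcurl hB
  have hBt : DifferentiableAt ℝ (tdt B) z := differentiableAt_fderiv_apply hB _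
  rw [tcurl_smul hcurl hBt, ← tdt_tcurl hB, tdt, fderiv_fun_pow 2 hcurl]
  simp only [tdt, smul_apply, smul_eq_mul, nsmul_eq_mul]
  push_cast
  ring

theorem tdt_one_sub_normSq_sq (hv : DifferentiableAt ℝ v z) :
    tdt (fun y => (1 - normSq (v y)) ^ 2) z
      = -4 * (1 - normSq (v z)) * rip (tdt v z) (v z) := by
  have hN := differentiableAt_normSq hv
  rw [tdt, fderiv_fun_pow 2 (hN.const_sub 1), fderiv_const_sub, smul_apply, neg_apply,
    fderiv_normSq_apply hv, tdt]
  simp only [smul_eq_mul, nsmul_eq_mul]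
  push_cast
  ring

theorem tdt_half_normSq_mul {q : ℝ × ℝ → ℝ} (hv : DifferentiableAt ℝ v z)
    (hq : DifferentiableAt ℝ q z.1) :
    tdt (fun y => 1 / 2 * normSq (v y) * q y.1) z = q z.1 * rip (tdt v z) (v z) := by
  have hN := differentiableAt_normSq hv
  have hq' : DifferentiableAt ℝ (fun y : (ℝ × ℝ) × ℝ => q y.1) z := hq.comp z differentiableAt_fst
  have hqt : fderiv ℝ (fun y : (ℝ × ℝ) × ℝ => q y.1) z ((0, 0), 1) = 0 := tdt_comp_fst hq
  rw [tdt, fderiv_fun_mul (hN.const_mul _) hq', fderiv_const_mul hN]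
  simp only [add_apply, smul_apply, smul_eq_mul, fderiv_normSq_apply hv, hqt, tdt]
  ring

theorem differentiableAt_tglEnergy (ε : ℝ) (hv : ContDiffAt ℝ 2 v z) (hB : ContDiffAt ℝ 2 B z) :
    DifferentiableAt ℝ (tglEnergy ε v B) z := by
  have hB' := hB.differentiableAt two_ne_zero
  have hN := differentiableAt_normSq (hv.differentiableAt two_ne_zero)
  exact ((((differentiableAt_normSq (differentiableAt_tcpd1 hv hB')).add
    (differentiableAt_normSq (differentiableAt_tcpd2 hv hB'))).add
    (((hN.const_sub 1).pow 2).mul_const _)).add ((differentiableAt_tcurl hB).pow 2)).const_mul _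

theorem tdt_tglEnergy (ε : ℝ) (hv : ContDiffAt ℝ 2 v z) (hB : ContDiffAt ℝ 2 B z) :
    tdt (tglEnergy ε v B) z
      = tdiv (fun y => ripv (tdt v y) (tcovGrad B v y)) z
        + tcurl (fun y => tcurl B y • tdt B y) z
        - rip (tdt v z) (tcovLap B v z + v z / (ε ^ 2 : ℂ) * (1 - (normSq (v z) : ℂ)))
        - rdot (tdt B z) (tgradPerp (tcurl B) z + ripv (I * v z) (tcovGrad B v z)) := by
  have hv' := hv.differentiableAt two_ne_zero
  have hB' := hB.differentiableAt two_ne_zero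
  have hgrad : DifferentiableAt ℝ (fun y => normSq (tcpd1 B v y) + normSq (tcpd2 B v y)) z :=
    (differentiableAt_normSq (differentiableAt_tcpd1 hv hB')).add
      (differentiableAt_normSq (differentiableAt_tcpd2 hv hB'))
  have hpot : DifferentiableAt ℝ (fun y => (1 - normSq (v y)) ^ 2) z :=
    ((differentiableAt_normSq hv').const_sub 1).pow 2
  have hcurl : DifferentiableAt ℝ (fun y => tcurl B y ^ 2) z := (differentiableAt_tcurl hB).pow 2
  have hsplit : tdt (tglEnergy ε v B) z
      = 1 / 2 * (tdt (fun y => normSq (tcpd1 B v y) + normSq (tcpd2 B v y)) z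
        + (2 * ε ^ 2)⁻¹ * tdt (fun y => (1 - normSq (v y)) ^ 2) z
        + tdt (fun y => tcurl B y ^ 2) z) := by
    have hderiv := (((hgrad.hasFDerivAt.add (hpot.hasFDerivAt.mul_const (2 * ε ^ 2)⁻¹)).add
      hcurl.hasFDerivAt).const_mul (1 / 2)).fderiv
    exact congrArg (· ((0, 0), 1)) hderiv
  have hforce : v z / (ε ^ 2 : ℂ) * (1 - (normSq (v z) : ℂ))
      = v z * (((ε ^ 2)⁻¹ * (1 - normSq (v z)) : ℝ) : ℂ) := by
    push_cast
    ring
  rw [hsplit, tdt_normSq_tcovGrad hv hB', tdt_one_sub_normSq_sq hv', tdt_tcurl_sq hB,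
    rip_add_right, hforce, rip_mul_ofReal_right, rdot_add_right]
  ring

theorem covt_zero (w : (ℝ × ℝ) × ℝ → ℂ) : covt (fun _ => 0) w = tdt w := by
  funext y
  simp [covt]

theorem tgrad_zero (z : (ℝ × ℝ) × ℝ) : tgrad (fun _ => 0) z = 0 := by
  simp [tgrad, sp1, sp2]

theorem tvel_zero (hv : ContDiffAt ℝ 2 v z) (hB : DifferentiableAt ℝ B z) :
    tvel v B (fun _ => 0) z
      = (2 : ℝ) • ripv (tdt v z) (I • tcovGrad B v z) - (1 - normSq (v z)) • tdt B z := by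
  have hcurrent : DifferentiableAt ℝ (fun y => ripv (I * v y) (tcovGrad B v y)) z :=
    differentiableAt_ripv ((hv.differentiableAt two_ne_zero).const_mul I)
      (differentiableAt_tcovGrad hv hB)
  have e₁ : sp1 (fun y => rip (I * v y) (tdt v y)) z
        - (tdt (fun y => ripv (I * v y) (tcovGrad B v y)) z).1
      = 2 * rip (tdt v z) (I * tcpd1 B v z) + normSq (v z) * (tdt B z).1 := by
    rw [← tdt_fst hB, tdt, ← fderiv_fst_apply hcurrent]
    exact fderiv_rip_I_mul_sub_fderiv_rip_I_mul hB.fst hv _ _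
  have e₂ : sp2 (fun y => rip (I * v y) (tdt v y)) z
        - (tdt (fun y => ripv (I * v y) (tcovGrad B v y)) z).2
      = 2 * rip (tdt v z) (I * tcpd2 B v z) + normSq (v z) * (tdt B z).2 := by
    rw [← tdt_snd hB, tdt, ← fderiv_snd_apply hcurrent]
    exact fderiv_rip_I_mul_sub_fderiv_rip_I_mul hB.snd hv _ _
  rw [tvel, covt_zero, tgrad_zero, add_zero]
  ext
  · simp only [tgrad, Prod.fst_sub, Prod.smul_fst, smul_eq_mul, e₁]
    simp only [ripv, tcovGrad, Prod.smul_fst, smul_eq_mul]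
    ring
  · simp only [tgrad, Prod.snd_sub, Prod.smul_snd, smul_eq_mul, e₂]
    simp only [ripv, tcovGrad, Prod.smul_snd, smul_eq_mul]
    ring

theorem rdot_tvel_zero (hv : ContDiffAt ℝ 2 v z) (hB : DifferentiableAt ℝ B z) (Z : ℝ × ℝ) :
    rdot (tvel v B (fun _ => 0) z) Z
      = rip (tdt v z) (2 * I * cdotR (tcovGrad B v z) Z)
        - (1 - normSq (v z)) * rdot (tdt B z) Z := by
  rw [tvel_zero hv hB]
  simp only [rdot, ripv, rip, cdotR, tcovGrad, Prod.smul_mk, Prod.fst_sub, Prod.snd_sub,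
    Prod.smul_fst, Prod.smul_snd, smul_eq_mul, mul_re, mul_im, add_re, add_im, I_re, I_im,
    ofReal_re, ofReal_im, re_ofNat, im_ofNat]
  ring

end SpaceTime

section Potentials

variable {f : ℝ × ℝ → ℝ} {x : ℝ × ℝ}

theorem differentiableAt_sgrad (hf : ContDiffAt ℝ 2 f x) : DifferentiableAt ℝ (sgrad f) x :=
  (differentiableAt_fderiv_apply hf _).prodMk (differentiableAt_fderiv_apply hf _)

theorem differentiableAt_sgradPerp (hf : ContDiffAt ℝ 2 f x) :
    DifferentiableAt ℝ (sgradPerp f) x :=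
  (differentiableAt_fderiv_apply hf _).neg.prodMk (differentiableAt_fderiv_apply hf _)

end Potentials

theorem modified_energy_density_evolution_general {ε : ℝ} (_hε : ε ≠ 0)
    {Z : ℝ × ℝ → ℝ × ℝ} {v : (ℝ × ℝ) × ℝ → ℂ} {B : (ℝ × ℝ) × ℝ → ℝ × ℝ} {z : (ℝ × ℝ) × ℝ}
    (hZ : DifferentiableAt ℝ Z z.1) (hv : ContDiffAt ℝ 2 v z) (hB : ContDiffAt ℝ 2 B z)
    (hv_eq : tdt v z
      = tcovLap B v z + v z / (ε ^ 2 : ℂ) * (1 - (normSq (v z) : ℂ))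
        + 2 * I * cdotR (tcovGrad B v z) (Z z.1) - v z * (rdot (Z z.1) (Z z.1) : ℂ))
    (hB_eq : tdt B z
      = tgradPerp (tcurl B) z + ripv (I * v z) (tcovGrad B v z) + (normSq (v z) - 1) • Z z.1) :
    tdt (fun y => tglEnergy ε v B y + 1 / 2 * normSq (v y) * rdot (Z y.1) (Z y.1)) z
      = tdiv (fun y => ripv (tdt v y) (tcovGrad B v y)) z
        + tcurl (fun y => tcurl B y • tdt B y) z
        - normSq (tdt v z)
        - rdot (tdt B z) (tdt B z)
        + rdot (tvel v B (fun _ => 0) z) (Z z.1) := by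
  have hZZ : DifferentiableAt ℝ (fun x => rdot (Z x) (Z x)) z.1 :=
    (hZ.fst.mul hZ.fst).add (hZ.snd.mul hZ.snd)
  have hv' := hv.differentiableAt two_ne_zero
  have hNZ : DifferentiableAt ℝ
      (fun y : (ℝ × ℝ) × ℝ => 1 / 2 * normSq (v y) * rdot (Z y.1) (Z y.1)) z :=
    ((differentiableAt_normSq hv').const_mul _).mul (hZZ.comp z differentiableAt_fst)
  have hadd : tdt (fun y => tglEnergy ε v B y + 1 / 2 * normSq (v y) * rdot (Z y.1) (Z y.1)) z
      = tdt (tglEnergy ε v B) z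
        + tdt (fun y => 1 / 2 * normSq (v y) * rdot (Z y.1) (Z y.1)) z := by
    rw [tdt, fderiv_fun_add (differentiableAt_tglEnergy ε hv hB) hNZ]
    rfl
  have hv_pair := congrArg (rip (tdt v z)) hv_eq
  have hB_pair := congrArg (rdot (tdt B z)) hB_eq
  rw [rip_sub_right, rip_add_right, rip_mul_ofReal_right, rip_self] at hv_pair
  rw [rdot_add_right, rdot_smul_right] at hB_pair
  rw [hadd, tdt_tglEnergy ε hv hB, tdt_half_normSq_mul hv' hZZ,
    rdot_tvel_zero hv (hB.differentiableAt two_ne_zero)]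
  linear_combination hv_pair + hB_pair

/-- evolution of the modified energy density
g̃⁰_ε(v,B) = g⁰_ε(v,B) + ½|v|²|Z|², with the interaction term V(v,B,0)·Z. -/
theorem modified_energy_density_evolution
(Ω : Set (ℝ × ℝ)) (hΩ : IsOpen Ω) (ε : ℝ) (hε : 0 < ε) (h_ex : ℝ)
    (f h₀ : ℝ × ℝ → ℝ)
    (hf : ContDiffOn ℝ (⊤ : ℕ∞) f Ω) (hh₀ : ContDiffOn ℝ (⊤ : ℕ∞) h₀ Ω)
    (hΔf : ∀ x ∈ Ω, slap f x = f x) (hΔh₀ : ∀ x ∈ Ω, slap h₀ x = h₀ x)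
    (Z : ℝ × ℝ → ℝ × ℝ) (hZ : Z = fun x => sgrad f x - h_ex • sgradPerp h₀ x)
    (v : (ℝ × ℝ) × ℝ → ℂ) (B : (ℝ × ℝ) × ℝ → ℝ × ℝ)
    (hv : ContDiffOn ℝ (⊤ : ℕ∞) v (Ω ×ˢ (Set.univ : Set ℝ)))
    (hB : ContDiffOn ℝ (⊤ : ℕ∞) B (Ω ×ˢ (Set.univ : Set ℝ)))
    (heq1 : ∀ x ∈ Ω, ∀ t : ℝ,
      tdt v (x, t) + Complex.I * (f x : ℂ) * v (x, t)
        = tcovLap B v (x, t)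
          + v (x, t) / (ε ^ 2 : ℂ) * (1 - (Complex.normSq (v (x, t)) : ℂ))
          + 2 * Complex.I * cdotR (tcovGrad B v (x, t)) (Z x)
          + Complex.I * v (x, t) * (f x : ℂ)
          - v (x, t) * ((rdot (Z x) (Z x) : ℝ) : ℂ))
    (heq2 : ∀ x ∈ Ω, ∀ t : ℝ,
      tdt B (x, t) + sgrad f x
        = tgradPerp (tcurl B) (x, t)
          + ripv (Complex.I * v (x, t)) (tcovGrad B v (x, t))
          + (Complex.normSq (v (x, t))) • sgrad f x
          - ((Complex.normSq (v (x, t)) - 1) * h_ex) • sgradPerp h₀ x) :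
    ∀ x ∈ Ω, ∀ t : ℝ,
      tdt (fun y => tglEnergy ε v B y
          + (1 / 2) * Complex.normSq (v y) * rdot (Z y.1) (Z y.1)) (x, t)
        = tdiv (fun y => ripv (tdt v y) (tcovGrad B v y)) (x, t)
          + tcurl (fun y => (tcurl B y) • tdt B y) (x, t)
          - Complex.normSq (tdt v (x, t))
          - rdot (tdt B (x, t)) (tdt B (x, t))
          + rdot (tvel v B (fun _ => 0) (x, t)) (Z x) := by
  subst hZ
  intro x hx t
  have hΩx := hΩ.mem_nhds hx
  have hΩt : Ω ×ˢ Set.univ ∈ nhds (x, t) := prod_mem_nhds hΩx Filter.univ_mem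
  have hZ : DifferentiableAt ℝ (fun x => sgrad f x - h_ex • sgradPerp h₀ x) x :=
    (differentiableAt_sgrad ((hf.contDiffAt hΩx).of_le ENat.LEInfty.out)).fun_sub
      ((differentiableAt_sgradPerp ((hh₀.contDiffAt hΩx).of_le ENat.LEInfty.out)).const_smul h_ex)
  exact modified_energy_density_evolution_general hε.ne' hZ
    ((hv.contDiffAt hΩt).of_le ENat.LEInfty.out) ((hB.contDiffAt hΩt).of_le ENat.LEInfty.out)
    (by linear_combination heq1 x hx t) (by linear_combination (norm := module) heq2 x hx t)

end
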